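/- Let φ be a weakly holomorphic Jacobi form of weight 2 and index m. Then R_{m₁,m₂}(φ) = 0 for every unordered factorization m = m₁·m₂; in particular, taking m₁ = 1, the constant-coefficient sum R[φ] = ∑_{r∈ℤ} c_φ(0,r) vanishes. -/

import Mathlib

noncomputable section

open Complex Filter Topology MeasureTheory
open scoped Classical

/-- `ee x = e^{2πix}`. -/
def ee (x : ℂ) : ℂ := Complex.exp (2 * (Real.pi : ℂ) * Complex.I * x)

/-- The index-`m` elliptic transformation law on `ℍ × ℂ`. -/
def EllipticLaw (m : ℕ) (φ : ℂ → ℂ → ℂ) : Prop :=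
  ∀ τ : ℂ, 0 < τ.im → ∀ z : ℂ, ∀ lam mu : ℤ,
    φ τ (z + (lam : ℂ) * τ + (mu : ℂ)) =
      ee (-(m : ℂ) * ((lam : ℂ) ^ 2 * τ + 2 * (lam : ℂ) * z)) * φ τ z

/-- The weight-`k` index-`m` modular transformation law on `ℍ × ℂ`. -/
def ModularLaw (k : ℤ) (m : ℕ) (φ : ℂ → ℂ → ℂ) : Prop :=
  ∀ τ : ℂ, 0 < τ.im → ∀ z : ℂ, ∀ a b c d : ℤ, a * d - b * c = 1 →
    φ (((a : ℂ) * τ + (b : ℂ)) / ((c : ℂ) * τ + (d : ℂ))) (z / ((c : ℂ) * τ + (d : ℂ))) =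
      ((c : ℂ) * τ + (d : ℂ)) ^ k *
        ee ((m : ℂ) * (c : ℂ) * z ^ 2 / ((c : ℂ) * τ + (d : ℂ))) * φ τ z

/-- The theta function `θ_{m,ℓ}(τ,z) = ∑_{r ≡ ℓ (mod 2m)} q^{r²/4m} y^r`. -/
def jTheta (m : ℕ) (l : ℤ) (τ z : ℂ) : ℂ :=
  ∑' n : ℤ, ee (((l : ℂ) + 2 * (m : ℂ) * (n : ℂ)) ^ 2 / (4 * (m : ℂ)) * τ +
      ((l : ℂ) + 2 * (m : ℂ) * (n : ℂ)) * z)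

/-- The point `z_s = ατ + β` for `s = (α,β) ∈ ℚ²`. -/
def zpt (s : ℚ × ℚ) (τ : ℂ) : ℂ := (s.1 : ℚ) * τ + (s.2 : ℚ)

/-- A holomorphic function on `ℍ × ℂ` satisfying the index-`m` elliptic transformation law,
together with its Fourier coefficient data `coeff Δ ℓ = C(Δ,ℓ)` (so that
`c(n,r) = C(4nm - r², r)`, `C(Δ,ℓ)` depends on `ℓ` only modulo `2m`, and `C(Δ,ℓ) = 0` on
pairs with `Δ + ℓ² ≢ 0 (mod 4m)`). -/
structure EllFormData (m : ℕ) where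
  toFun : ℂ → ℂ → ℂ
  coeff : ℤ → ℤ → ℂ
  holo : ∀ τ z : ℂ, 0 < τ.im → DifferentiableAt ℂ (fun p : ℂ × ℂ => toFun p.1 p.2) (τ, z)
  elliptic : EllipticLaw m toFun
  expansion : ∀ τ z : ℂ, 0 < τ.im →
    HasSum (fun p : ℤ × ℤ => coeff (4 * (m : ℤ) * p.1 - p.2 ^ 2) p.2 *
      ee ((p.1 : ℂ) * τ + (p.2 : ℂ) * z)) (toFun τ z)
  periodic : ∀ Δ l : ℤ, coeff Δ (l + 2 * (m : ℤ)) = coeff Δ l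
  support : ∀ Δ l : ℤ, ¬ (4 * (m : ℤ)) ∣ (Δ + l ^ 2) → coeff Δ l = 0

/-- An elliptic form is weak if `c(n,r) = 0` for `n < 0`. -/
def IsWeakC (m : ℕ) (C : ℤ → ℤ → ℂ) : Prop :=
  ∀ n r : ℤ, n < 0 → C (4 * (m : ℤ) * n - r ^ 2) r = 0

/-- Even coefficients: `C(Δ,-ℓ) = C(Δ,ℓ)`. -/
def IsEvenC (C : ℤ → ℤ → ℂ) : Prop := ∀ Δ l : ℤ, C Δ (-l) = C Δ l

/-- Holomorphic (as opposed to weak): `C(Δ,ℓ) = 0` for `Δ < 0`. -/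
def IsHolC (C : ℤ → ℤ → ℂ) : Prop := ∀ Δ l : ℤ, Δ < 0 → C Δ l = 0

/-- Cuspidal: `C(Δ,ℓ) = 0` for `Δ ≤ 0`. -/
def IsCuspC (C : ℤ → ℤ → ℂ) : Prop := ∀ Δ l : ℤ, Δ ≤ 0 → C Δ l = 0

/-- Optimal growth: `C(Δ,ℓ) = 0` for `Δ < -1`. -/
def IsOGC (C : ℤ → ℤ → ℂ) : Prop := ∀ Δ l : ℤ, Δ < -1 → C Δ l = 0

/-- A representative `ℓ* = ℓ·(a·x - b·y)` (with `ax + by = gcd(a,b) = 1`) of the residue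
class determined by `ℓ* ≡ -ℓ (mod 2a)`, `ℓ* ≡ ℓ (mod 2b)`, used to define the
Atkin–Lehner involution `W_a` on coefficients. -/
def lstar (a b : ℕ) (l : ℤ) : ℤ := l * ((a : ℤ) * Nat.gcdA a b - (b : ℤ) * Nat.gcdB a b)

/-- The coefficients of `φ|u_t` (index `m/t²`):
`C_{φ|u_t}(Δ,ℓ) = ∑_{r mod 2m/t, r ≡ ℓ (mod 2m/t²)} C_φ(Δt², rt)`. -/
def CoeffU (m t : ℕ) (C : ℤ → ℤ → ℂ) (Δ l : ℤ) : ℂ :=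
  ∑ j ∈ Finset.range t,
    C (Δ * (t : ℤ) ^ 2) ((l + 2 * (m : ℤ) / (t : ℤ) ^ 2 * (j : ℤ)) * (t : ℤ))

/-- For an unordered factorization `m = m₁·m₂` with `t = gcd(m₁,m₂)`,
`R_{m₁,m₂}(φ) = R[(φ|u_t)|W_{m₁/t}] = ∑_{r∈ℤ} C_{(φ|u_t)|W_{m₁/t}}(-r², r)`. -/
def Rfactor (m : ℕ) (C : ℤ → ℤ → ℂ) (m₁ m₂ : ℕ) : ℂ :=
  ∑' r : ℤ, CoeffU m (Nat.gcd m₁ m₂) C (-(r ^ 2))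
      (lstar (m₁ / Nat.gcd m₁ m₂) (m₂ / Nat.gcd m₁ m₂) r)

/-!
For `m = m₁m₂`, the sum `F` of the suitably normalized values of `φ` over the `m₁`-torsion points
satisfies `F(-1/τ) = τ²F(τ)`, so `F dτ` has a primitive on `ℍ` invariant under `τ ↦ -1/τ`. Since
`-1/ρ = ρ + 1` for `ρ = e^{2πi/3}`, the integral of `F` from `ρ` to `ρ + 1` vanishes, which says
that the constant Fourier coefficient of `F` is zero. That coefficient is `m₁` times a sum over
`ℤ²` modulo the vector `(m₂, m₁)`; a unimodular change of coordinates sends this vector to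
`(0, gcd(m₁, m₂))`, and the sum over the corresponding strip is `R_{m₁,m₂}(φ)`.
-/

/-! ### Exponentials and Fourier series -/

lemma ee_add (x y : ℂ) : ee (x + y) = ee x * ee y := by
  simp only [ee, mul_add, Complex.exp_add]

lemma ee_intCast (n : ℤ) : ee n = 1 :=
  Complex.exp_eq_one_iff.2 ⟨n, by ring⟩

@[fun_prop]
lemma differentiable_ee : Differentiable ℂ ee := by
  unfold ee; fun_prop

lemma norm_ee_add_ofReal (x : ℂ) (y : ℝ) : ‖ee (x + y)‖ = ‖ee x‖ := by
  simp [ee, Complex.norm_exp]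

lemma sum_ee_mul_div (M : ℕ) [NeZero M] (j : ℤ) :
    ∑ k : Fin M, ee (j * ((k : ℕ) / M)) = if (M : ℤ) ∣ j then (M : ℂ) else 0 := by
  set ζ := Complex.exp (2 * Real.pi * Complex.I / M)
  have hζ : IsPrimitiveRoot ζ M := Complex.isPrimitiveRoot_exp M (NeZero.ne M)
  have hterm (k : ℕ) : ee (j * (k / M)) = (ζ ^ j) ^ k := by
    rw [← Complex.exp_int_mul, ← Complex.exp_nat_mul, ee]
    ring_nf
  simp only [hterm, Fin.sum_univ_eq_sum_range (fun k => (ζ ^ j) ^ k)]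
  split_ifs with hj
  · simp [(hζ.zpow_eq_one_iff_dvd j).2 hj]
  · have hpow : (ζ ^ j) ^ M = 1 := by
      rw [← zpow_natCast, zpow_comm, zpow_natCast, hζ.pow_eq_one, one_zpow]
    rw [geom_sum_eq (mt (hζ.zpow_eq_one_iff_dvd j).1 hj), hpow, sub_self, zero_div]

lemma integral_ee_intCast_mul (N : ℤ) (τ : ℂ) :
    ∫ x in (0 : ℝ)..1, ee (N * (τ + x)) = if N = 0 then 1 else 0 := by
  split_ifs with hN
  · simp [hN, ee]
  · have hterm (x : ℝ) :
        ee (N * (τ + x)) = ee (N * τ) * Complex.exp (2 * Real.pi * Complex.I * N * x) := by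
      rw [mul_add, ee_add, ee, ee]
      ring_nf
    have hperiod : Complex.exp (2 * Real.pi * Complex.I * N) = 1 := ee_intCast N
    simp_rw [hterm]
    rw [intervalIntegral.integral_const_mul,
      integral_exp_mul_complex (mul_ne_zero Complex.two_pi_I_ne_zero (by exact_mod_cast hN))]
    simp [hperiod]

lemma hasSum_integral_of_hasSum_ee {ι : Type*} [Countable ι] {c : ℤ × ι → ℂ} {f : ℝ → ℂ} {τ : ℂ}
    (hf : ∀ x : ℝ, HasSum (fun p => c p * ee (p.1 * (τ + x))) (f x)) :
    HasSum (fun i => c (0, i)) (∫ x in (0 : ℝ)..1, f x) := by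
  have hnorm (p : ℤ × ι) (x : ℝ) :
      ‖c p * ee (p.1 * (τ + x))‖ = ‖c p * ee (p.1 * (τ + (0 : ℝ)))‖ := by
    have hsplit : (p.1 : ℂ) * (τ + x) = p.1 * (τ + (0 : ℝ)) + (p.1 * x : ℝ) := by
      push_cast; ring
    rw [norm_mul, norm_mul, hsplit, norm_ee_add_ofReal]
  have hint : HasSum (fun p => ∫ x in (0 : ℝ)..1, c p * ee (p.1 * (τ + x)))
      (∫ x in (0 : ℝ)..1, f x) :=
    intervalIntegral.hasSum_integral_of_dominated_convergence
      (fun p _ => ‖c p * ee (p.1 * (τ + (0 : ℝ)))‖)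
      (fun p => Continuous.aestronglyMeasurable
        (continuous_const.mul (differentiable_ee.continuous.comp (by fun_prop))))
      (fun p => .of_forall fun x _ => (hnorm p x).le)
      (.of_forall fun _ _ => (hf 0).summable.norm) intervalIntegrable_const
      (.of_forall fun x _ => hf x)
  simp_rw [intervalIntegral.integral_const_mul, integral_ee_intCast_mul] at hint
  rw [← (Prod.mk_right_injective (0 : ℤ)).hasSum_iff] at hint
  · simpa [Function.comp_def] using hint
  · rintro ⟨N, i⟩ hN
    have : N ≠ 0 := fun h => hN ⟨i, by simp [h]⟩
    simp [this]

lemma hasSum_prod_of_fintype {α ι E : Type*} [Fintype ι] [AddCommMonoid E] [TopologicalSpace E]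
    [ContinuousAdd E] {f : α × ι → E} {a : ι → E} (hf : ∀ i, HasSum (fun x => f (x, i)) (a i)) :
    HasSum f (∑ i, a i) := by
  have hslice (i : ι) : HasSum (fun p : α × ι => if p.2 = i then f p else 0) (a i) := by
    rw [← (Prod.mk_left_injective i).hasSum_iff]
    · simpa [Function.comp_def] using hf i
    · rintro ⟨x, j⟩ hj
      exact if_neg fun h => hj ⟨x, by rw [← h]⟩
  simpa using hasSum_sum fun i (_ : i ∈ Finset.univ) => hslice i

lemma sum_fin_neg_of_periodic {E : Type*} [AddCommMonoid E] {M : ℕ} [NeZero M] {h : ℤ → E}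
    (hh : Function.Periodic h M) : ∑ k : Fin M, h (-(k : ℕ)) = ∑ k : Fin M, h (k : ℕ) := by
  have hemod (j : ℤ) : h (j % M) = h j := by
    simpa [Int.emod_def, mul_comm] using hh.sub_zsmul_eq (x := j) (j / M)
  refine Fintype.sum_equiv (Equiv.neg (Fin M)) _ _ fun k => ?_
  have hval : (((-k : Fin M) : ℕ) : ℤ) = (M - (k : ℕ)) % M := by
    rw [Fin.neg_def]
    push_cast [k.2.le]
    rfl
  rw [Equiv.neg_apply, hval, hemod, hh.sub_eq']

/-! ### Functions on `ℤ²` with one period -/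

lemma bijective_prod_fin_to_quotient_zmultiples {X Y : Type*} [AddCommGroup X] [AddCommGroup Y]
    {M : ℕ} [NeZero M] (e : X ≃+ Y × ℤ) {v : X} (hv : (e v).2 = M) :
    Function.Bijective
      fun p : Y × Fin M => (e.symm (p.1, (p.2 : ℕ)) : X ⧸ AddSubgroup.zmultiples v) := by
  constructor
  · rintro ⟨y, l⟩ ⟨y', l'⟩ h
    obtain ⟨n, hn⟩ := AddSubgroup.mem_zmultiples_iff.1 (QuotientAddGroup.eq.1 h)
    have hdiff : n • e v = (-y + y', -((l : ℕ) : ℤ) + (l' : ℕ)) := by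
      rw [← map_zsmul, hn]
      simp
    have hsnd : n * M = -((l : ℕ) : ℤ) + (l' : ℕ) := by
      simpa [hv] using congrArg Prod.snd hdiff
    have hll : -((l : ℕ) : ℤ) + (l' : ℕ) = 0 :=
      Int.eq_zero_of_abs_lt_dvd (hsnd ▸ dvd_mul_left (M : ℤ) n) (by rw [abs_lt]; omega)
    have hn0 : n = 0 := by
      simpa [hll, NeZero.ne M] using hsnd
    have hfst : -y + y' = 0 := by
      simpa [hn0] using (congrArg Prod.fst hdiff).symm
    obtain rfl := neg_add_eq_zero.1 hfst
    obtain rfl : l = l' := Fin.ext (by omega)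
    rfl
  · intro x
    obtain ⟨x, rfl⟩ := QuotientAddGroup.mk_surjective x
    obtain ⟨⟨q, l⟩, hql⟩ := (Int.divModEquiv M).symm.surjective (e x).2
    refine ⟨((e x).1 - q • (e v).1, l), QuotientAddGroup.eq.2 ⟨q, e.injective ?_⟩⟩
    ext
    · simp
    · simp [hv, ← hql]

lemma hasSum_periodic_lift_iff {X Y E : Type*} [AddCommGroup X] [AddCommGroup Y] [AddCommMonoid E]
    [TopologicalSpace E] {M : ℕ} [NeZero M] (e : X ≃+ Y × ℤ) {v : X} (hv : (e v).2 = M)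
    {f : X → E} (hf : Function.Periodic f v) {a : E} :
    HasSum hf.lift a ↔ HasSum (fun p : Y × Fin M => f (e.symm (p.1, (p.2 : ℕ)))) a :=
  (Equiv.ofBijective _ (bijective_prod_fin_to_quotient_zmultiples e hv)).hasSum_iff.symm

/-! ### Weight 2 under `τ ↦ -1/τ` -/

lemma neg_one_div_im_pos {τ : ℂ} (hτ : 0 < τ.im) : 0 < (-1 / τ).im := by
  have : 0 < Complex.normSq τ := Complex.normSq_pos.2 fun h => by simp [h] at hτ
  rw [neg_div, one_div, Complex.neg_im, Complex.inv_im, neg_div, neg_neg]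
  positivity

lemma primitive_neg_one_div {F G : ℂ → ℂ} (hG : ∀ τ : ℂ, 0 < τ.im → HasDerivAt G (F τ) τ)
    (hF : ∀ τ : ℂ, 0 < τ.im → F (-1 / τ) = τ ^ 2 * F τ) {τ : ℂ} (hτ : 0 < τ.im) :
    G (-1 / τ) = G τ := by
  have hderiv (w : ℂ) (hw : 0 < w.im) : HasDerivAt (fun w => G (-1 / w)) (F w) w := by
    have hw0 : w ≠ 0 := by rintro rfl; simp at hw
    have hinv : HasDerivAt (fun w : ℂ => -1 / w) (1 / w ^ 2) w := by
      simpa [div_eq_mul_inv] using (hasDerivAt_inv hw0).const_mul (-1)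
    refine (HasDerivAt.comp w (hG _ (neg_one_div_im_pos hw)) hinv).congr_deriv ?_
    rw [hF w hw]
    field_simp
  refine (isOpen_lt continuous_const Complex.continuous_im).eqOn_of_deriv_eq (𝕜 := ℂ)
    (convex_halfSpace_im_gt 0).isPreconnected
    (fun w hw => (hderiv w hw).differentiableAt.differentiableWithinAt)
    (fun w hw => (hG w hw).differentiableAt.differentiableWithinAt)
    (fun w hw => (hderiv w hw).deriv.trans (hG w hw).deriv.symm)
    (x := Complex.I) (by simp) ?_ hτ
  simp [neg_div]

lemma exists_primitive_of_differentiableAt {F : ℂ → ℂ}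
    (hF : ∀ τ : ℂ, 0 < τ.im → DifferentiableAt ℂ F τ) :
    ∃ G : ℂ → ℂ, ∀ τ : ℂ, 0 < τ.im → HasDerivAt G (F τ) τ := by
  obtain ⟨G, hG⟩ := (convex_halfSpace_im_gt 0).exists_forall_hasDerivWithinAt
    fun τ hτ => (hF τ hτ).differentiableWithinAt
  exact ⟨G, fun τ hτ => (hG τ hτ).hasDerivAt
    ((isOpen_lt continuous_const Complex.continuous_im).mem_nhds hτ)⟩

lemma integral_eq_zero_of_weight_two {F : ℂ → ℂ} (hF : ∀ τ : ℂ, 0 < τ.im → DifferentiableAt ℂ F τ)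
    (hS : ∀ τ : ℂ, 0 < τ.im → F (-1 / τ) = τ ^ 2 * F τ) {ρ : ℂ} (hρ : 0 < ρ.im)
    (hSρ : -1 / ρ = ρ + 1) : ∫ x in (0 : ℝ)..1, F (ρ + x) = 0 := by
  obtain ⟨G, hG⟩ := exists_primitive_of_differentiableAt hF
  have him (x : ℝ) : 0 < (ρ + x).im := by simpa using hρ
  have hderiv (x : ℝ) : HasDerivAt (fun x : ℝ => G (ρ + x)) (F (ρ + x)) x :=
    (HasDerivAt.comp_const_add ρ (x : ℂ) (hG _ (him x))).comp_ofReal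
  have hcont : Continuous fun x : ℝ => F (ρ + x) := continuous_iff_continuousAt.2 fun x =>
    ContinuousAt.comp (f := fun x : ℝ => ρ + (x : ℂ)) (hF _ (him x)).continuousAt (by fun_prop)
  rw [intervalIntegral.integral_eq_sub_of_hasDerivAt (fun x _ => hderiv x)
    (hcont.intervalIntegrable 0 1)]
  simp [← hSρ, primitive_neg_one_div hG hS hρ]

lemma exists_neg_one_div_eq_add_one : ∃ ρ : ℂ, 0 < ρ.im ∧ -1 / ρ = ρ + 1 := by
  have hsq : Real.sqrt 3 ^ 2 = 3 := Real.sq_sqrt (by norm_num)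
  set ρ : ℂ := ⟨-1 / 2, Real.sqrt 3 / 2⟩
  have hρ : 0 < ρ.im := by positivity
  have hρ0 : ρ ≠ 0 := by intro h; simp [h] at hρ
  refine ⟨ρ, hρ, (div_eq_iff hρ0).2 (Complex.ext ?_ ?_)⟩
  · simp only [ρ, neg_re, one_re, mul_re, add_re, add_im, one_im, add_zero]
    linarith
  · simp only [ρ, neg_im, one_im, neg_zero, mul_im, add_re, one_re, add_im, add_zero]
    ring

/-! ### Values at torsion points -/

/-- The specialization of `φ` at the torsion point `z = ατ + β`, multiplied by the exponential
factor `e(m(α²τ + αβ))` for which only the weight factor of the modular law remains. -/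
def torsionValue (m : ℕ) (φ : ℂ → ℂ → ℂ) (α β τ : ℂ) : ℂ :=
  ee (m * (α ^ 2 * τ + α * β)) * φ τ (α * τ + β)

lemma ModularLaw.torsionValue_neg_one_div {k : ℤ} {m : ℕ} {φ : ℂ → ℂ → ℂ}
    (hφ : ModularLaw k m φ) (α β : ℂ) {τ : ℂ} (hτ : 0 < τ.im) :
    torsionValue m φ α β (-1 / τ) = τ ^ k * torsionValue m φ β (-α) τ := by
  have hτ0 : τ ≠ 0 := by rintro rfl; simp at hτ
  have hlaw := hφ τ hτ (β * τ + -α) 0 (-1) 1 0 (by norm_num)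
  have harg : (β * τ + -α) / τ = α * (-1 / τ) + β := by field_simp; ring
  simp only [Int.cast_zero, Int.cast_one, Int.cast_neg, zero_mul, zero_add, one_mul, add_zero,
    mul_one, harg] at hlaw
  have hexp : m * (α ^ 2 * (-1 / τ) + α * β) + m * (β * τ + -α) ^ 2 / τ =
      m * (β ^ 2 * τ + β * -α) := by
    field_simp
    ring
  rw [torsionValue, torsionValue, hlaw, ← hexp, ee_add]
  ring

lemma EllipticLaw.torsionValue_add_one {m : ℕ} {φ : ℂ → ℂ → ℂ} (hφ : EllipticLaw m φ) (α β : ℂ)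
    {τ : ℂ} (hτ : 0 < τ.im) :
    torsionValue m φ (α + 1) β τ = ee (-(m * β)) * torsionValue m φ α β τ := by
  have hlaw := hφ τ hτ (α * τ + β) 1 0
  simp only [Int.cast_one, Int.cast_zero, add_zero] at hlaw
  have harg : (α + 1) * τ + β = α * τ + β + 1 * τ := by ring
  rw [torsionValue, torsionValue, harg, hlaw, ← mul_assoc, ← mul_assoc, ← ee_add, ← ee_add]
  ring_nf

lemma EllFormData.differentiableAt_torsionValue {m : ℕ} (φ : EllFormData m) (α β : ℂ) {τ : ℂ}
    (hτ : 0 < τ.im) : DifferentiableAt ℂ (torsionValue m φ.toFun α β) τ := by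
  have hφ : DifferentiableAt ℂ (fun τ => φ.toFun τ (α * τ + β)) τ :=
    DifferentiableAt.comp (f := fun τ : ℂ => (τ, α * τ + β)) τ (φ.holo τ _ hτ) (by fun_prop)
  unfold torsionValue
  fun_prop

lemma EllFormData.hasSum_torsionValue {m : ℕ} (φ : EllFormData m) (α β : ℂ) {τ : ℂ}
    (hτ : 0 < τ.im) :
    HasSum (fun p : ℤ × ℤ => φ.coeff (4 * m * p.1 - p.2 ^ 2) p.2 *
        (ee ((m * α + p.2) * β) * ee ((p.1 + α * (m * α + p.2)) * τ)))
      (torsionValue m φ.toFun α β τ) := by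
  refine ((φ.expansion τ (α * τ + β) hτ).mul_left _).congr_fun fun p => ?_
  rw [mul_left_comm _ (φ.coeff _ _), ← ee_add, ← ee_add]
  ring_nf

/-- The sum of the torsion values of `φ` over the `M²` points `(-l/M, k/M)` with `0 ≤ l, k < M`.
It is modular when `M ∣ m`; the sign of `l` keeps the Fourier indices `Ms + (m/M)l` free of
signs. -/
def torsionSum (m M : ℕ) (φ : ℂ → ℂ → ℂ) (τ : ℂ) : ℂ :=
  ∑ l : Fin M, ∑ k : Fin M, torsionValue m φ (-(l : ℕ) / M) ((k : ℕ) / M) τ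

lemma torsionSum_neg_one_div {k : ℤ} {m M M' : ℕ} [NeZero M] (hm : M * M' = m) {φ : ℂ → ℂ → ℂ}
    (hmod : ModularLaw k m φ) (hell : EllipticLaw m φ) {τ : ℂ} (hτ : 0 < τ.im) :
    torsionSum m M φ (-1 / τ) = τ ^ k * torsionSum m M φ τ := by
  have hM : (M : ℂ) ≠ 0 := NeZero.ne _
  have hper (l : ℕ) :
      Function.Periodic (fun j : ℤ => torsionValue m φ (j / M) ((l : ℕ) / M) τ) M := fun j => by
    have harg : ((j + M : ℤ) : ℂ) / M = j / M + 1 := by push_cast; field_simp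
    have hphase : -((m : ℂ) * (l / M)) = (-(M' * l) : ℤ) := by
      rw [← hm]; push_cast; field_simp
    simp only [harg, hell.torsionValue_add_one _ _ hτ, hphase, ee_intCast, one_mul]
  calc torsionSum m M φ (-1 / τ)
      = τ ^ k * ∑ l : Fin M, ∑ j : Fin M, torsionValue m φ ((j : ℕ) / M) ((l : ℕ) / M) τ := by
        simp_rw [torsionSum, hmod.torsionValue_neg_one_div _ _ hτ, ← neg_div, neg_neg,
          Finset.mul_sum]
    _ = τ ^ k * ∑ l : Fin M, ∑ j : Fin M, torsionValue m φ (-(j : ℕ) / M) ((l : ℕ) / M) τ := by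
        congr! 2 with l
        simpa using (sum_fin_neg_of_periodic (hper l)).symm
    _ = τ ^ k * torsionSum m M φ τ := by
        rw [Finset.sum_comm, torsionSum]

namespace EllFormData

variable {m M M' : ℕ} [NeZero M] (φ : EllFormData m) {τ : ℂ}

lemma hasSum_sum_torsionValue (hm : M * M' = m) (l : ℤ) (hτ : 0 < τ.im) :
    HasSum (fun p : ℤ × ℤ => M *
        φ.coeff (4 * m * p.1 - (M * p.2 - M' * l) ^ 2) (M * p.2 + M' * l) * ee (p.1 * τ))
      (∑ k : Fin M, torsionValue m φ.toFun (-l / M) ((k : ℕ) / M) τ) := by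
  have hM : (M : ℂ) ≠ 0 := NeZero.ne _
  have hMz : (M : ℤ) ≠ 0 := NeZero.ne _
  have hfreq : (m : ℂ) * (-l / M) = -(M' * l) := by rw [← hm]; push_cast; field_simp
  have hsum := hasSum_sum fun (k : Fin M) (_ : k ∈ Finset.univ) =>
    φ.hasSum_torsionValue (-l / M) ((k : ℕ) / M) hτ
  have horth (r : ℤ) : ∑ k : Fin M, ee ((-(M' * l) + r) * ((k : ℕ) / M)) =
      if (M : ℤ) ∣ r - M' * l then (M : ℂ) else 0 := by
    rw [← sum_ee_mul_div]
    congr! 4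
    push_cast; ring
  simp only [hfreq, ← Finset.mul_sum, ← Finset.sum_mul, horth] at hsum
  -- Only the terms `(n, r)` with `r ≡ M'l (mod M)` survive: `(n, r) = (N + ls, Ms + M'l)`.
  have hinj : Function.Injective fun p : ℤ × ℤ => (p.1 + l * p.2, M * p.2 + M' * l) := by
    rintro ⟨N, s⟩ ⟨N', s'⟩ h
    obtain ⟨hN, hs⟩ := Prod.mk.inj h
    obtain rfl : s = s' := mul_left_cancel₀ hMz (add_right_cancel hs)
    simpa using hN
  rw [← hinj.hasSum_iff] at hsum
  · refine hsum.congr_fun fun ⟨N, s⟩ => ?_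
    have hdisc : 4 * (m : ℤ) * N - (M * s - M' * l) ^ 2 =
        4 * m * (N + l * s) - (M * s + M' * l) ^ 2 := by
      rw [← hm]; push_cast; ring
    have hexp : (N : ℂ) = ((N + l * s : ℤ) : ℂ) +
        -l / M * (-(M' * l) + ((M * s + M' * l : ℤ) : ℂ)) := by
      push_cast; field_simp; ring
    simp only [Function.comp_apply, add_sub_cancel_right, dvd_mul_right, if_true, ← hexp, hdisc]
    ring
  · rintro ⟨n, r⟩ hnr
    have hdvd : ¬ (M : ℤ) ∣ r - M' * l := fun ⟨s, hs⟩ =>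
      hnr ⟨(n - l * s, s), by ext <;> simp [← hs]⟩
    simp [hdvd]

end EllFormData

/-! ### The constant term -/

/-- The coefficient `C(-x², y)` with `x = Ms - M'l` and `y = Ms + M'l`, as a function of
`p = (s, l)`. For `MM' = m` these are, up to the factor `M`, the terms contributing to the
constant term of `torsionSum m M φ`; note `y² - x² = 4m·sl`. -/
def latticeCoeff (C : ℤ → ℤ → ℂ) (M M' : ℤ) (p : ℤ × ℤ) : ℂ :=
  C (-(M * p.1 - M' * p.2) ^ 2) (M * p.1 + M' * p.2)

lemma periodic_latticeCoeff {C : ℤ → ℤ → ℂ} {M M' : ℤ}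
    (hC : ∀ Δ, Function.Periodic (C Δ) (2 * (M * M'))) :
    Function.Periodic (latticeCoeff C M M') (M', M) := by
  rintro ⟨s, l⟩
  simp only [latticeCoeff, Prod.mk_add_mk]
  rw [← hC _ (M * s + M' * l)]
  ring_nf

lemma EllFormData.hasSum_latticeCoeff {m M M' : ℕ} [NeZero M] (φ : EllFormData m)
    (hmod : ModularLaw 2 m φ.toFun) (hm : M * M' = m) :
    HasSum (fun p : ℤ × Fin M => latticeCoeff φ.coeff M M' (p.1, (p.2 : ℕ))) 0 := by
  obtain ⟨ρ, hρ, hSρ⟩ := exists_neg_one_div_eq_add_one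
  have hdiff (τ : ℂ) (hτ : 0 < τ.im) : DifferentiableAt ℂ (torsionSum m M φ.toFun) τ :=
    .fun_sum fun l _ => .fun_sum fun k _ => φ.differentiableAt_torsionValue _ _ hτ
  have hintegral := integral_eq_zero_of_weight_two hdiff
    (fun τ hτ => by simpa using torsionSum_neg_one_div hm hmod φ.elliptic hτ) hρ hSρ
  have him (x : ℝ) : 0 < (ρ + x).im := by simpa using hρ
  have hfourier (x : ℝ) : HasSum (fun p : ℤ × ℤ × Fin M => M *
      φ.coeff (4 * m * p.1 - (M * p.2.1 - M' * (p.2.2 : ℕ)) ^ 2) (M * p.2.1 + M' * (p.2.2 : ℕ)) *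
        ee (p.1 * (ρ + x))) (torsionSum m M φ.toFun (ρ + x)) := by
    rw [← (Equiv.prodAssoc ℤ ℤ (Fin M)).hasSum_iff]
    refine hasSum_prod_of_fintype fun l => ?_
    simpa [Function.comp_def] using φ.hasSum_sum_torsionValue hm (l : ℕ) (him x)
  have hconst := hasSum_integral_of_hasSum_ee hfourier
  rw [hintegral, ← mul_zero (M : ℂ), hasSum_mul_left_iff (NeZero.ne _)] at hconst
  simpa [latticeCoeff] using hconst

/-- The unimodular change of coordinates of `R × R` attached to a Bézout relation `ax + by = 1`.
It sends `(tb, ta)` to `(0, t)`. -/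
@[simps]
def bezoutAddEquiv {R : Type*} [CommRing R] {a b x y : R} (h : a * x + b * y = 1) :
    R × R ≃+ R × R where
  toFun p := (a * p.1 - b * p.2, y * p.1 + x * p.2)
  invFun p := (x * p.1 + b * p.2, -y * p.1 + a * p.2)
  left_inv p := Prod.ext (by linear_combination p.1 * h) (by linear_combination p.2 * h)
  right_inv p := Prod.ext (by linear_combination p.1 * h) (by linear_combination p.2 * h)
  map_add' p q := by ext <;> simp only [Prod.fst_add, Prod.snd_add] <;> ring

lemma mul_gcdA_add_mul_gcdB_of_coprime {a b : ℕ} (hab : a.Coprime b) :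
    (a : ℤ) * a.gcdA b + b * a.gcdB b = 1 := by
  rw [← Nat.gcd_eq_gcd_ab, hab.gcd_eq_one, Nat.cast_one]

lemma coeffU_eq_sum_latticeCoeff (C : ℤ → ℤ → ℂ) {a b t : ℕ} (hab : a.Coprime b) (r : ℤ) :
    CoeffU (a * t * (b * t)) t C (-(r ^ 2)) (lstar a b r) =
      ∑ j : Fin t, latticeCoeff C (a * t) (b * t)
        ((bezoutAddEquiv (mul_gcdA_add_mul_gcdB_of_coprime hab)).symm (r, (j : ℕ))) := by
  rw [CoeffU, Finset.sum_range]
  refine Finset.sum_congr rfl fun j _ => ?_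
  have ht : (t : ℤ) ^ 2 ≠ 0 := pow_ne_zero _ (by exact_mod_cast j.pos.ne')
  have hquot : 2 * ((a * t * (b * t) : ℕ) : ℤ) / t ^ 2 = 2 * (a * b) :=
    Int.ediv_eq_of_eq_mul_left ht (by push_cast; ring)
  have hbezout := mul_gcdA_add_mul_gcdB_of_coprime hab
  simp only [latticeCoeff, bezoutAddEquiv_symm_apply, lstar, hquot]
  congr 1
  · linear_combination r ^ 2 * t ^ 2 * ((a : ℤ) * a.gcdA b + b * a.gcdB b + 1) * hbezout
  · ring

lemma hasSum_coeffU_of_coprime {C : ℤ → ℤ → ℂ} {a b t : ℕ} [NeZero a] [NeZero t]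
    (hab : a.Coprime b) (hC : ∀ Δ, Function.Periodic (C Δ) (2 * (a * t * (b * t)))) {A : ℂ}
    (h : HasSum (fun p : ℤ × Fin (a * t) =>
      latticeCoeff C (a * t) (b * t) (p.1, (p.2 : ℕ))) A) :
    HasSum (fun r : ℤ => CoeffU (a * t * (b * t)) t C (-(r ^ 2)) (lstar a b r)) A := by
  have hbezout := mul_gcdA_add_mul_gcdB_of_coprime hab
  have hper := periodic_latticeCoeff hC
  -- Both sums run over a set of representatives of `ℤ²` modulo the period `(bt, at)`.
  have hlift : HasSum hper.lift A :=
    (hasSum_periodic_lift_iff (M := a * t) (AddEquiv.refl (ℤ × ℤ)) (by simp) hper).2 h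
  rw [hasSum_periodic_lift_iff (M := t) (bezoutAddEquiv hbezout)
    (by rw [bezoutAddEquiv_apply]; linear_combination t * hbezout)] at hlift
  simp_rw [coeffU_eq_sum_latticeCoeff C hab]
  exact hlift.prod_fiberwise fun r => hasSum_fintype _

lemma hasSum_coeffU_gcd {C : ℤ → ℤ → ℂ} {m₁ m₂ : ℕ} [NeZero m₁]
    (hC : ∀ Δ, Function.Periodic (C Δ) (2 * (m₁ * m₂))) {A : ℂ}
    (h : HasSum (fun p : ℤ × Fin m₁ => latticeCoeff C m₁ m₂ (p.1, (p.2 : ℕ))) A) :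
    HasSum (fun r : ℤ => CoeffU (m₁ * m₂) (m₁.gcd m₂) C (-(r ^ 2))
      (lstar (m₁ / m₁.gcd m₂) (m₂ / m₁.gcd m₂) r)) A := by
  obtain ⟨a, b, hab, h₁, h₂⟩ := Nat.exists_coprime m₁ m₂
  generalize m₁.gcd m₂ = t at *
  subst h₁ h₂
  obtain ⟨ha, ht⟩ := mul_ne_zero_iff.1 (NeZero.ne (a * t))
  have : NeZero a := ⟨ha⟩
  have : NeZero t := ⟨ht⟩
  rw [Nat.mul_div_cancel _ (NeZero.pos t), Nat.mul_div_cancel _ (NeZero.pos t)]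
  push_cast at hC h
  exact hasSum_coeffU_of_coprime hab hC h

theorem weakly_holomorphic_residues_vanish_general (m : ℕ) (hm : 0 < m) (φ : EllFormData m)
    (hmod : ModularLaw 2 m φ.toFun) :
    (∀ m₁ m₂ : ℕ, m₁ * m₂ = m → HasSum (fun r : ℤ => CoeffU m (m₁.gcd m₂) φ.coeff (-(r ^ 2))
      (lstar (m₁ / m₁.gcd m₂) (m₂ / m₁.gcd m₂) r)) 0) ∧
    HasSum (fun r : ℤ => φ.coeff (-(r ^ 2)) r) 0 := by
  constructor
  · rintro m₁ m₂ rfl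
    have : NeZero m₁ := ⟨(Nat.pos_of_mul_pos_right hm).ne'⟩
    exact hasSum_coeffU_gcd (fun Δ l => by simpa using φ.periodic Δ l)
      (φ.hasSum_latticeCoeff hmod rfl)
  · have hres := φ.hasSum_latticeCoeff hmod (one_mul m)
    rw [← (Equiv.prodUnique ℤ (Fin 1)).symm.hasSum_iff] at hres
    simpa [latticeCoeff, Function.comp_def] using hres

/-- Theorem: for a weakly holomorphic Jacobi form `φ` of weight 2 and index `m`,
`R_{m₁,m₂}(φ) = 0` for every unordered factorization `m = m₁·m₂`; in particular (taking
`m₁ = 1`), `R[φ] = ∑_{r∈ℤ} c_φ(0,r) = 0`. -/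
theorem weakly_holomorphic_residues_vanish (m : ℕ) (hm : 0 < m) (φ : EllFormData m)
    (hmod : ModularLaw 2 m φ.toFun)
    (hwh : ∃ n₀ : ℤ, ∀ n r : ℤ, n < n₀ → φ.coeff (4 * (m : ℤ) * n - r ^ 2) r = 0) :
    (∀ m₁ m₂ : ℕ, m₁ * m₂ = m → Rfactor m φ.coeff m₁ m₂ = 0) ∧
    (∑' r : ℤ, φ.coeff (-(r ^ 2)) r) = 0 := by
  have h := weakly_holomorphic_residues_vanish_general m hm φ hmod
  exact ⟨fun m₁ m₂ hm' => (h.1 m₁ m₂ hm').tsum_eq, h.2.tsum_eq⟩
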